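/- Let Q be a finite quiver with positive rank function n and R-charge function R : A → ℝ with 0 < R(a) < 2 for every arrow, satisfying the gauge anomaly condition and the NSVZ condition. Assume: (i) every baryonic charge q satisfies Σ_{a∈A} n_{t(a)} n_{h(a)} (q(h(a)) − q(t(a))) = 0 and Σ_{a∈A} n_{t(a)} n_{h(a)} (R(a)−1)² (q(h(a)) − q(t(a))) = 0; (ii) for every non-constant baryonic charge q, Σ_{a∈A} n_{t(a)} n_{h(a)} (R(a)−1)(q(h(a)) − q(t(a)))² < 0; (iii) the quantity λ := (1/3)(Σ_{v∈V} n_v² + Σ_{a∈A} n_{t(a)} n_{h(a)} (R(a)−1)³) is positive. For s ∈ ℝ define the V×V matrix D_Q(s) by D_Q(s)_{vw} = δ_{vw}(1 − e^{−2s}) − Σ_{a: t(a)=v, h(a)=w} e^{−s R(a)} + Σ_{a: t(a)=w, h(a)=v} e^{−s(2−R(a))}. Then there exists ε > 0 such that D_Q(s) is invertible for all s ∈ (0, ε), and for all vertices v, w, lim_{s→0⁺} s³ · (D_Q(s)⁻¹)_{vw} = n_v n_w / λ = (27/32) · n_v n_w / a, where a = (9/32)(Σ_{v∈V} n_v² +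 Σ_{a∈A} n_{t(a)} n_{h(a)} (R(a)−1)³) is the a-central charge. In particular the leading pole of the Hilbert series of the superconformal quiver gauge theory is governed by the a-central charge, establishing the equivalence of a-maximization and volume minimization. -/

import Mathlib

open Finset Matrix Filter Topology

namespace QuiverHilbert

section Resolvent

variable {V : Type*} [Fintype V]

theorem tendsto_dotProduct {ι : Type*} {l : Filter ι} {f g : ι → V → ℝ} {a b : V → ℝ}
    (hf : Tendsto f l (𝓝 a)) (hg : Tendsto g l (𝓝 b)) :
    Tendsto (fun i => f i ⬝ᵥ g i) l (𝓝 (a ⬝ᵥ b)) :=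
  tendsto_finsetSum _ fun v _ => (tendsto_pi_nhds.1 hf v).mul (tendsto_pi_nhds.1 hg v)

theorem tendsto_mulVec {ι : Type*} {l : Filter ι} {M : ι → Matrix V V ℝ} {g : ι → V → ℝ}
    {A : Matrix V V ℝ} {b : V → ℝ} (hM : Tendsto M l (𝓝 A)) (hg : Tendsto g l (𝓝 b)) :
    Tendsto (fun i => M i *ᵥ g i) l (𝓝 (A *ᵥ b)) :=
  tendsto_pi_nhds.2 fun v => tendsto_dotProduct (tendsto_pi_nhds.1 hM v) hg

theorem exists_vecMul_eq_of_forall_dotProduct_eq_zero {M : Matrix V V ℝ} {b : V → ℝ}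
    (hb : ∀ p, M *ᵥ p = 0 → b ⬝ᵥ p = 0) : ∃ y, y ᵥ* M = b := by
  classical
  have hmem : dotProductEquiv ℝ V b ∈ LinearMap.range M.mulVecLin.dualMap := by
    rw [LinearMap.range_dualMap_eq_dualAnnihilator_ker, Submodule.mem_dualAnnihilator]
    intro p hp
    exact hb p (by simpa using hp)
  obtain ⟨φ, hφ⟩ := hmem
  obtain ⟨y, rfl⟩ := (dotProductEquiv ℝ V).surjective φ
  refine ⟨y, dotProduct_eq _ _ fun p => ?_⟩
  rw [← dotProduct_mulVec]
  exact LinearMap.congr_fun hφ p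

/-- A matrix family `E s = E₀ + s E₁ + s² E₂ + s³ F s` degenerating along the line spanned by `N`
to third order at `s = 0`, with `N`-component of the cubic term equal to `lam`. -/
structure CubicDegeneration (E F : ℝ → Matrix V V ℝ) (E₀ E₁ E₂ E₃ : Matrix V V ℝ)
    (N : V → ℝ) (lam : ℝ) : Prop where
  expansion : ∀ s, s ≠ 0 → E s = E₀ + s • E₁ + s ^ 2 • E₂ + s ^ 3 • F s
  tendsto_remainder : Tendsto F (𝓝[>] 0) (𝓝 E₃)
  left_kernel : ∀ p, E₀ *ᵥ p = 0 → p ᵥ* E₀ = 0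
  kernel : E₀ *ᵥ N = 0
  left_first : N ᵥ* E₁ = 0
  right_first : E₁ *ᵥ N = 0
  definite : ∀ p, E₀ *ᵥ p = 0 → p ⬝ᵥ E₁ *ᵥ p = 0 → ∃ α : ℝ, p = α • N
  second : ∀ p, E₀ *ᵥ p = 0 → N ⬝ᵥ E₂ *ᵥ p = 0
  third : N ⬝ᵥ E₃ *ᵥ N = lam
  lam_ne_zero : lam ≠ 0

namespace CubicDegeneration

variable {E F : ℝ → Matrix V V ℝ} {E₀ E₁ E₂ E₃ : Matrix V V ℝ} {N : V → ℝ} {lam : ℝ}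

theorem limit_eq (H : CubicDegeneration E F E₀ E₁ E₂ E₃ N lam)
    {l : Filter ℝ} [l.NeBot] (hl : l ≤ 𝓝[>] 0) {u c : ℝ → V → ℝ} {u₀ c₀ : V → ℝ}
    (hu : Tendsto u l (𝓝 u₀)) (hc : Tendsto c l (𝓝 c₀))
    (huc : ∀ᶠ s in l, E s *ᵥ u s = s ^ 3 • c s) :
    u₀ = (N ⬝ᵥ c₀ / lam) • N := by
  have hs : Tendsto (fun s : ℝ => s) l (𝓝 0) := hl.trans nhdsWithin_le_nhds
  have hs0 : ∀ᶠ s in l, s ≠ 0 :=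
    Filter.Eventually.filter_mono hl
      (eventually_mem_nhdsWithin.mono fun s (h : 0 < s) => h.ne')
  have hF := H.tendsto_remainder.mono_left hl
  have hFu := tendsto_mulVec hF hu
  have hMu (M : Matrix V V ℝ) : Tendsto (fun s => M *ᵥ u s) l (𝓝 (M *ᵥ u₀)) :=
    tendsto_mulVec tendsto_const_nhds hu
  have hpu (p : V → ℝ) {g : ℝ → V → ℝ} {g₀ : V → ℝ} (hg : Tendsto g l (𝓝 g₀)) :
      Tendsto (fun s => p ⬝ᵥ g s) l (𝓝 (p ⬝ᵥ g₀)) := tendsto_dotProduct tendsto_const_nhds hg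
  have hexp : ∀ᶠ s in l, E₀ *ᵥ u s + s • E₁ *ᵥ u s + s ^ 2 • E₂ *ᵥ u s + s ^ 3 • F s *ᵥ u s
      = s ^ 3 • c s := by
    filter_upwards [huc, hs0] with s h1 h2
    rw [← h1, H.expansion s h2]
    simp only [add_mulVec, smul_mulVec]
  have hexp' (p : V → ℝ) : ∀ᶠ s in l, p ⬝ᵥ E₀ *ᵥ u s + s * (p ⬝ᵥ E₁ *ᵥ u s)
      + s ^ 2 * (p ⬝ᵥ E₂ *ᵥ u s) + s ^ 3 * (p ⬝ᵥ F s *ᵥ u s) = s ^ 3 * (p ⬝ᵥ c s) := by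
    filter_upwards [hexp] with s h1
    simpa [dotProduct_add, dotProduct_smul] using congrArg (p ⬝ᵥ ·) h1
  have hker : E₀ *ᵥ u₀ = 0 := by
    have h1 : Tendsto (fun s => s ^ 3 • c s - s • E₁ *ᵥ u s - s ^ 2 • E₂ *ᵥ u s
        - s ^ 3 • F s *ᵥ u s) l (𝓝 ((0 : ℝ) ^ 3 • c₀ - (0 : ℝ) • E₁ *ᵥ u₀
        - (0 : ℝ) ^ 2 • E₂ *ᵥ u₀ - (0 : ℝ) ^ 3 • E₃ *ᵥ u₀)) :=
      ((((hs.pow 3).smul hc).sub (hs.smul (hMu E₁))).sub ((hs.pow 2).smul (hMu E₂))).sub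
        ((hs.pow 3).smul hFu)
    have h2 := tendsto_nhds_unique_of_eventuallyEq (hMu E₀) h1 (by
      filter_upwards [hexp] with s h
      rw [← h]; abel)
    simpa using h2
  have hquad : u₀ ⬝ᵥ E₁ *ᵥ u₀ = 0 := by
    have h1 : Tendsto (fun s => s ^ 2 * (u₀ ⬝ᵥ c s) - s * (u₀ ⬝ᵥ E₂ *ᵥ u s)
        - s ^ 2 * (u₀ ⬝ᵥ F s *ᵥ u s)) l (𝓝 ((0 : ℝ) ^ 2 * (u₀ ⬝ᵥ c₀)
        - (0 : ℝ) * (u₀ ⬝ᵥ E₂ *ᵥ u₀) - (0 : ℝ) ^ 2 * (u₀ ⬝ᵥ E₃ *ᵥ u₀))) :=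
      (((hs.pow 2).mul (hpu u₀ hc)).sub (hs.mul (hpu u₀ (hMu E₂)))).sub
        ((hs.pow 2).mul (hpu u₀ hFu))
    have h2 := tendsto_nhds_unique_of_eventuallyEq (hpu u₀ (hMu E₁)) h1 (by
      filter_upwards [hexp' u₀, hs0] with s h h0
      rw [dotProduct_mulVec u₀ E₀, H.left_kernel _ hker, zero_dotProduct] at h
      apply mul_left_cancel₀ h0
      linear_combination h)
    simpa using h2
  obtain ⟨α, hα⟩ := H.definite u₀ hker hquad
  obtain ⟨y, hy⟩ : ∃ y, y ᵥ* E₀ = -(N ᵥ* E₂) := by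
    refine exists_vecMul_eq_of_forall_dotProduct_eq_zero fun p hp => ?_
    rw [neg_dotProduct, ← dotProduct_mulVec, H.second p hp, neg_zero]
  have hfin : N ⬝ᵥ E₃ *ᵥ u₀ + y ⬝ᵥ E₁ *ᵥ u₀ = N ⬝ᵥ c₀ := by
    have h1 : Tendsto (fun s => N ⬝ᵥ c s + s ^ 2 * (y ⬝ᵥ c s) - s * (y ⬝ᵥ E₂ *ᵥ u s)
        - s ^ 2 * (y ⬝ᵥ F s *ᵥ u s)) l (𝓝 (N ⬝ᵥ c₀ + (0 : ℝ) ^ 2 * (y ⬝ᵥ c₀)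
        - (0 : ℝ) * (y ⬝ᵥ E₂ *ᵥ u₀) - (0 : ℝ) ^ 2 * (y ⬝ᵥ E₃ *ᵥ u₀))) :=
      (((hpu N hc).add ((hs.pow 2).mul (hpu y hc))).sub (hs.mul (hpu y (hMu E₂)))).sub
        ((hs.pow 2).mul (hpu y hFu))
    have h2 := tendsto_nhds_unique_of_eventuallyEq ((hpu N hFu).add (hpu y (hMu E₁))) h1 (by
      filter_upwards [hexp' N, hexp' y, hs0] with s hN hY h0
      rw [dotProduct_mulVec N E₀, H.left_kernel _ H.kernel, zero_dotProduct,
        dotProduct_mulVec N E₁, H.left_first, zero_dotProduct] at hN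
      rw [dotProduct_mulVec y E₀, hy, neg_dotProduct, ← dotProduct_mulVec] at hY
      apply mul_left_cancel₀ (pow_ne_zero 3 h0)
      linear_combination hN + s ^ 2 * hY)
    simpa using h2
  rw [hα] at hfin
  simp only [mulVec_smul, dotProduct_smul, H.third, H.right_first, dotProduct_zero, smul_eq_mul,
    mul_zero, add_zero] at hfin
  rw [hα, ← hfin, mul_div_cancel_right₀ _ H.lam_ne_zero]

variable [DecidableEq V]

theorem eventually_isUnit (H : CubicDegeneration E F E₀ E₁ E₂ E₃ N lam) :
    ∀ᶠ s in 𝓝[>] 0, IsUnit (E s) := by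
  by_contra hcon
  have hfreq : ∃ᶠ s in 𝓝[>] (0 : ℝ), ∃ u : V → ℝ, ‖u‖ = 1 ∧ E s *ᵥ u = 0 := by
    refine (not_eventually.1 hcon).mono fun s hs => ?_
    rw [Matrix.isUnit_iff_isUnit_det, isUnit_iff_ne_zero, not_not,
      ← Matrix.exists_mulVec_eq_zero_iff] at hs
    obtain ⟨x, hx, hEx⟩ := hs
    exact ⟨‖x‖⁻¹ • x, norm_smul_inv_norm (𝕜 := ℝ) hx, by rw [mulVec_smul, hEx, smul_zero]⟩
  have : (𝓝[>] (0 : ℝ) ⊓ 𝓟 {s | ∃ u : V → ℝ, ‖u‖ = 1 ∧ E s *ᵥ u = 0}).NeBot :=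
    frequently_mem_iff_neBot.1 hfreq
  obtain ⟨U, hU⟩ := Ultrafilter.exists_le
    (𝓝[>] (0 : ℝ) ⊓ 𝓟 {s | ∃ u : V → ℝ, ‖u‖ = 1 ∧ E s *ᵥ u = 0})
  have hex : ∀ᶠ s in (U : Filter ℝ), ∃ u : V → ℝ, ‖u‖ = 1 ∧ E s *ᵥ u = 0 :=
    le_principal_iff.1 (hU.trans inf_le_right)
  obtain ⟨u, hu⟩ := hex.choice
  obtain ⟨u₀, hu₀, hlim⟩ := (isCompact_sphere (0 : V → ℝ) 1).ultrafilter_le_nhds (U.map u)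
    (tendsto_principal.2 (hu.mono fun s hs => mem_sphere_zero_iff_norm.2 hs.1))
  have := H.limit_eq (hU.trans inf_le_left) (u := u) (c := fun _ => 0) hlim
    tendsto_const_nhds (hu.mono fun s hs => by rw [hs.2, smul_zero])
  rw [mem_sphere_zero_iff_norm, this] at hu₀
  simp at hu₀

theorem tendsto_inv (H : CubicDegeneration E F E₀ E₁ E₂ E₃ N lam) (v w : V) :
    Tendsto (fun s => s ^ 3 * (E s)⁻¹ v w) (𝓝[>] 0) (𝓝 (N v * N w / lam)) := by
  set x : ℝ → V → ℝ := fun s => s ^ 3 • ((E s)⁻¹ *ᵥ Pi.single w 1) with hx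
  suffices hlim : Tendsto x (𝓝[>] 0) (𝓝 ((N w / lam) • N)) by
    have := tendsto_pi_nhds.1 hlim v
    convert this using 2
    · simp [hx]
    · simp only [Pi.smul_apply, smul_eq_mul]; ring
  rw [tendsto_iff_ultrafilter]
  intro U hU
  let γ : ℝ → ℝ := fun s => (1 + ‖x s‖)⁻¹
  have hpos (s : ℝ) : 0 < 1 + ‖x s‖ := by positivity
  have hnorm (s : ℝ) : ‖γ s • x s‖ = 1 - γ s := by
    have := (hpos s).ne'
    rw [norm_smul, Real.norm_of_nonneg (inv_nonneg.2 (hpos s).le)]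
    simp only [γ]
    field_simp
    ring
  have hγ (s : ℝ) : γ s ∈ Set.Icc (0 : ℝ) 1 :=
    ⟨inv_nonneg.2 (hpos s).le, by linarith [norm_nonneg (γ s • x s), hnorm s]⟩
  obtain ⟨γ₀, -, hγ₀⟩ := isCompact_Icc.ultrafilter_le_nhds (U.map γ)
    (tendsto_principal.2 (Eventually.of_forall hγ))
  obtain ⟨u₀, -, hu₀⟩ := (isCompact_closedBall (0 : V → ℝ) 1).ultrafilter_le_nhds
    (U.map fun s => γ s • x s) (tendsto_principal.2 (Eventually.of_forall fun s => by
      rw [mem_closedBall_zero_iff, hnorm]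
      linarith [(hγ s).1]))
  replace hγ₀ : Tendsto γ U (𝓝 γ₀) := hγ₀
  replace hu₀ : Tendsto (fun s => γ s • x s) U (𝓝 u₀) := hu₀
  have heq := H.limit_eq hU hu₀ (hγ₀.smul (tendsto_const_nhds (x := Pi.single w (1 : ℝ))))
    ((Filter.Eventually.filter_mono hU H.eventually_isUnit).mono fun s hs => by
      rw [Matrix.isUnit_iff_isUnit_det] at hs
      simp only [hx, mulVec_smul, mulVec_mulVec, Matrix.mul_nonsing_inv _ hs, one_mulVec]
      rw [smul_comm])
  have hn0 : ‖u₀‖ = 1 - γ₀ :=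
    tendsto_nhds_unique hu₀.norm ((tendsto_const_nhds.sub hγ₀).congr fun s => (hnorm s).symm)
  have hne : γ₀ ≠ 0 := by
    rintro rfl
    rw [heq] at hn0
    simp at hn0
  have hlim := (hγ₀.inv₀ hne).smul hu₀
  have hval : γ₀⁻¹ • u₀ = (N w / lam) • N := by
    rw [heq, dotProduct_smul, dotProduct_single, smul_smul]
    congr 1
    simp only [smul_eq_mul]
    field_simp
  rw [hval] at hlim
  exact hlim.congr fun s => inv_smul_smul₀ (inv_ne_zero (hpos s).ne') _

end CubicDegeneration

end Resolvent

section ExpRemainder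

/-- The cubic Taylor remainder of `s ↦ exp (s * x)`, divided by `s ^ 3`. -/
noncomputable def expRemainder (x s : ℝ) : ℝ :=
  (Real.exp (s * x) - 1 - s * x - s ^ 2 * (x ^ 2 / 2)) / s ^ 3

theorem exp_eq_add_expRemainder (x : ℝ) {s : ℝ} (hs : s ≠ 0) :
    Real.exp (s * x) = 1 + s * x + s ^ 2 * (x ^ 2 / 2) + s ^ 3 * expRemainder x s := by
  rw [expRemainder]
  field_simp
  ring

theorem tendsto_expRemainder (x : ℝ) :
    Tendsto (expRemainder x) (𝓝[>] 0) (𝓝 (x ^ 3 / 6)) := by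
  have hlim : Tendsto (fun s : ℝ => s * x) (𝓝[>] 0) (𝓝 0) := by
    have : Tendsto (fun s : ℝ => s * x) (𝓝 0) (𝓝 (0 * x)) := tendsto_id.mul_const x
    rw [zero_mul] at this
    exact this.mono_left nhdsWithin_le_nhds
  have ho := (Real.exp_sub_sum_range_succ_isLittleO_pow 3).comp_tendsto hlim
  have hO : ((fun y : ℝ => y ^ 3) ∘ fun s : ℝ => s * x) =O[𝓝[>] 0] fun s : ℝ => s ^ 3 := by
    refine (Asymptotics.isBigO_const_mul_self (x ^ 3) (fun s : ℝ => s ^ 3) _).congr_left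
      fun s => ?_
    simp only [Function.comp_apply]
    ring
  have hz := (ho.trans_isBigO hO).tendsto_div_nhds_zero.add_const (x ^ 3 / 6)
  rw [zero_add] at hz
  refine hz.congr' ?_
  filter_upwards [eventually_mem_nhdsWithin] with s (hs : 0 < s)
  have := hs.ne'
  simp only [Function.comp_apply, sum_range_succ, sum_range_zero, Nat.factorial, expRemainder]
  field_simp
  push_cast
  ring

end ExpRemainder

section WeightedAdjacency

variable {V A : Type*} [Fintype A] [DecidableEq V]

/-- The matrix whose `(v, w)` entry is the total weight of the arrows from `v` to `w`. -/
def weightMatrix (t h : A → V) (f : A → ℝ) : Matrix V V ℝ :=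
  fun v w => ∑ a, if t a = v ∧ h a = w then f a else 0

theorem weightMatrix_mulVec [Fintype V] (t h : A → V) (f : A → ℝ) (x : V → ℝ) (v : V) :
    (weightMatrix t h f *ᵥ x) v = ∑ a, if t a = v then f a * x (h a) else 0 := by
  simp only [mulVec, dotProduct, weightMatrix, sum_mul]
  rw [sum_comm]
  refine sum_congr rfl fun a _ => ?_
  by_cases ha : t a = v <;> simp [ha]

theorem dotProduct_weightMatrix_mulVec [Fintype V] (t h : A → V) (f : A → ℝ) (x y : V → ℝ) :
    x ⬝ᵥ weightMatrix t h f *ᵥ y = ∑ a, f a * x (t a) * y (h a) := by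
  simp only [dotProduct, weightMatrix_mulVec, mul_sum]
  rw [sum_comm]
  refine sum_congr rfl fun a _ => ?_
  simp only [mul_ite, mul_zero, sum_ite_eq, mem_univ, if_true]
  ring

theorem weightMatrix_transpose (t h : A → V) (f : A → ℝ) :
    (weightMatrix t h f)ᵀ = weightMatrix h t f := by
  ext v w
  simp only [Matrix.transpose_apply, weightMatrix, and_comm]

theorem weightMatrix_add (t h : A → V) (f g : A → ℝ) :
    weightMatrix t h (f + g) = weightMatrix t h f + weightMatrix t h g := by
  ext v w
  simp only [weightMatrix, Matrix.add_apply, ← sum_add_distrib, Pi.add_apply]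
  exact sum_congr rfl fun a _ => by split_ifs <;> simp

theorem weightMatrix_smul (t h : A → V) (c : ℝ) (f : A → ℝ) :
    weightMatrix t h (c • f) = c • weightMatrix t h f := by
  ext v w
  simp only [weightMatrix, Matrix.smul_apply, Pi.smul_apply, smul_sum, smul_ite, smul_zero]

theorem tendsto_weightMatrix {ι : Type*} {l : Filter ι} (t h : A → V) {f : ι → A → ℝ}
    {g : A → ℝ} (hf : ∀ a, Tendsto (fun i => f i a) l (𝓝 (g a))) :
    Tendsto (fun i => weightMatrix t h (f i)) l (𝓝 (weightMatrix t h g)) := by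
  refine tendsto_pi_nhds.2 fun v => tendsto_pi_nhds.2 fun w => tendsto_finsetSum _ fun a _ => ?_
  split_ifs
  · exact hf a
  · exact tendsto_const_nhds

theorem weightMatrix_exp (t h : A → V) (x : A → ℝ) {s : ℝ} (hs : s ≠ 0) :
    weightMatrix t h (fun a => Real.exp (s * x a)) =
      weightMatrix t h (fun _ => 1) + s • weightMatrix t h x
        + s ^ 2 • weightMatrix t h (fun a => x a ^ 2 / 2)
        + s ^ 3 • weightMatrix t h (fun a => expRemainder (x a) s) := by
  simp only [← weightMatrix_smul, ← weightMatrix_add]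
  congr 1
  funext a
  simpa using exp_eq_add_expRemainder (x a) hs

end WeightedAdjacency

section SymmetrizedDenominator

variable {V A : Type*} [Fintype A] [DecidableEq V]

/-- The denominator matrix of the Hilbert series multiplied by `exp s`, in terms of `r = R - 1`. -/
noncomputable def symmDenominator (t h : A → V) (r : A → ℝ) (s : ℝ) : Matrix V V ℝ :=
  (Real.exp (s * 1) - Real.exp (s * -1)) • (1 : Matrix V V ℝ)
    - weightMatrix t h (fun a => Real.exp (s * -r a))
    + weightMatrix h t (fun a => Real.exp (s * r a))

theorem cubicDegeneration_symmDenominator [Fintype V] (t h : A → V) (r : A → ℝ) (N : V → ℝ)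
    (hN : ∀ v, N v ≠ 0) {lam : ℝ}
    (anom : ∀ v, ∑ a, (if h a = v then N (t a) else 0) = ∑ a, if t a = v then N (h a) else 0)
    (nsvz : ∀ v, 2 * N v + (∑ a, if t a = v then r a * N (h a) else 0)
      + (∑ a, if h a = v then r a * N (t a) else 0) = 0)
    (hTrRRB : ∀ q : V → ℝ,
      (∀ v, ∑ a, (if h a = v then N (t a) * q (t a) else 0)
        = ∑ a, if t a = v then N (h a) * q (h a) else 0) →
      ∑ a, N (t a) * N (h a) * r a ^ 2 * (q (h a) - q (t a)) = 0)
    (hTrRBB : ∀ q : V → ℝ,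
      (∀ v, ∑ a, (if h a = v then N (t a) * q (t a) else 0)
        = ∑ a, if t a = v then N (h a) * q (h a) else 0) →
      (¬ ∀ v w : V, q v = q w) →
      ∑ a, N (t a) * N (h a) * r a * (q (h a) - q (t a)) ^ 2 < 0)
    (hlam : lam = 1 / 3 * ((∑ v, N v ^ 2) + ∑ a, N (t a) * N (h a) * r a ^ 3))
    (hlam0 : lam ≠ 0) :
    CubicDegeneration (symmDenominator t h r)
      (fun s => (expRemainder 1 s - expRemainder (-1) s) • (1 : Matrix V V ℝ)
        - weightMatrix t h (fun a => expRemainder (-r a) s)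
        + weightMatrix h t (fun a => expRemainder (r a) s))
      (weightMatrix h t (fun _ => 1) - weightMatrix t h (fun _ => 1))
      ((2 : ℝ) • (1 : Matrix V V ℝ) + weightMatrix t h r + weightMatrix h t r)
      (weightMatrix h t (fun a => r a ^ 2 / 2) - weightMatrix t h (fun a => r a ^ 2 / 2))
      ((1 / 3 : ℝ) • (1 : Matrix V V ℝ) - weightMatrix t h (fun a => (-r a) ^ 3 / 6)
        + weightMatrix h t (fun a => r a ^ 3 / 6))
      N lam := by
  have hbary (p : V → ℝ)
      (hp : (weightMatrix h t (fun _ => 1) - weightMatrix t h (fun _ => 1)) *ᵥ p = 0) (v : V) :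
      ∑ a, (if h a = v then N (t a) * (p (t a) / N (t a)) else 0)
        = ∑ a, if t a = v then N (h a) * (p (h a) / N (h a)) else 0 := by
    have := congrFun hp v
    rw [sub_mulVec, Pi.sub_apply, weightMatrix_mulVec, weightMatrix_mulVec, Pi.zero_apply,
      sub_eq_zero] at this
    simpa [mul_div_cancel₀ _ (hN _)] using this
  have hfirst : ((2 : ℝ) • (1 : Matrix V V ℝ) + weightMatrix t h r + weightMatrix h t r) *ᵥ N
      = 0 := by
    funext v
    simpa [add_mulVec, smul_mulVec, weightMatrix_mulVec] using nsvz v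
  refine ⟨fun s hs => ?_, ?_, fun p hp => ?_, ?_, ?_, hfirst, fun p hp hquad => ?_,
    fun p hp => ?_, ?_, hlam0⟩
  · rw [symmDenominator, weightMatrix_exp h t r hs, weightMatrix_exp t h (fun a => -r a) hs,
      exp_eq_add_expRemainder 1 hs, exp_eq_add_expRemainder (-1) hs,
      show (fun a => -r a) = (-1 : ℝ) • r by funext a; simp, weightMatrix_smul]
    simp only [neg_sq]
    module
  · refine ((Tendsto.smul_const ?_ _).sub (tendsto_weightMatrix _ _ fun a =>
      tendsto_expRemainder _)).add (tendsto_weightMatrix _ _ fun a => tendsto_expRemainder _)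
    convert (tendsto_expRemainder 1).sub (tendsto_expRemainder (-1)) using 2
    norm_num
  · rw [← mulVec_transpose, transpose_sub, weightMatrix_transpose, weightMatrix_transpose,
      ← neg_sub, neg_mulVec, hp, neg_zero]
  · funext v
    rw [sub_mulVec, Pi.sub_apply, weightMatrix_mulVec, weightMatrix_mulVec, Pi.zero_apply,
      sub_eq_zero]
    simpa using anom v
  · rw [← mulVec_transpose]
    simp only [transpose_add, transpose_smul, transpose_one, weightMatrix_transpose]
    rwa [add_right_comm]
  · have hconst : ∀ v w, p v / N v = p w / N w := by
      by_contra hcon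
      refine (hTrRBB (fun v => p v / N v) (hbary p hp) hcon).ne ?_
      have h1 := congrArg ((fun v => p v ^ 2 / N v) ⬝ᵥ ·) hfirst
      simp only [add_mulVec, smul_mulVec, one_mulVec, dotProduct_add, dotProduct_smul,
        dotProduct_weightMatrix_mulVec, dotProduct_zero, smul_eq_mul] at h1 hquad
      have h2 : (fun v => p v ^ 2 / N v) ⬝ᵥ N = p ⬝ᵥ p := by
        refine sum_congr rfl fun v _ => ?_
        have := hN v
        field_simp
      rw [h2] at h1
      have h3 : ∑ a, N (t a) * N (h a) * r a * (p (h a) / N (h a) - p (t a) / N (t a)) ^ 2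
          = (∑ a, r a * (p (t a) ^ 2 / N (t a)) * N (h a))
            + (∑ a, r a * (p (h a) ^ 2 / N (h a)) * N (t a))
            - (∑ a, r a * p (t a) * p (h a)) - ∑ a, r a * p (h a) * p (t a) := by
        rw [← sum_add_distrib, ← sum_sub_distrib, ← sum_sub_distrib]
        refine sum_congr rfl fun a _ => ?_
        have := hN (t a)
        have := hN (h a)
        field_simp
        ring
      rw [h3]
      linarith
    rcases isEmpty_or_nonempty V with hV | ⟨⟨v₀⟩⟩
    · exact ⟨0, Subsingleton.elim _ _⟩
    · refine ⟨p v₀ / N v₀, funext fun v => ?_⟩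
      rw [← hconst v v₀, Pi.smul_apply, smul_eq_mul, div_mul_cancel₀ _ (hN v)]
  · have h1 := hTrRRB (fun v => p v / N v) (hbary p hp)
    rw [sub_mulVec, dotProduct_sub, dotProduct_weightMatrix_mulVec,
      dotProduct_weightMatrix_mulVec, ← sum_sub_distrib]
    rw [← mul_eq_zero_of_right (-(1 / 2) : ℝ) h1, mul_sum]
    refine sum_congr rfl fun a _ => ?_
    have := hN (t a)
    have := hN (h a)
    field_simp
    ring
  · simp only [add_mulVec, sub_mulVec, smul_mulVec, one_mulVec, dotProduct_add, dotProduct_sub,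
      dotProduct_smul, dotProduct_weightMatrix_mulVec, smul_eq_mul]
    have h1 : N ⬝ᵥ N = ∑ v, N v ^ 2 := sum_congr rfl fun v _ => (sq (N v)).symm
    rw [hlam, h1, mul_add, mul_sum (s := (univ : Finset A)), sub_add, sub_eq_add_neg,
      ← sum_sub_distrib, ← sum_neg_distrib]
    congr 1
    exact sum_congr rfl fun a _ => by ring

end SymmetrizedDenominator

end QuiverHilbert


/-- Equivalence of a-maximization and volume minimization: for a
superconformal quiver (gauge anomaly, NSVZ, vanishing baryonic anomalies,
negative-definite `Tr R B B` anomaly, positive `λ`), the denominator matrix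
`D_Q(s)` is invertible for small `s > 0` and
`lim_{s→0⁺} s³ (D_Q(s)⁻¹)_{vw} = n_v n_w / λ = (27/32) n_v n_w / a`, where `a`
is the a-central charge. -/
theorem a_maximization_eq_volume_minimization
    {V A : Type*} [Fintype V] [Fintype A] [DecidableEq V]
    (h t : A → V) (n : V → ℕ) (hn : ∀ v, 0 < n v)
    (R : A → ℝ) (hR : ∀ a, 0 < R a ∧ R a < 2)
    (anom : ∀ v : V, ∑ a : A, (if h a = v then (n (t a) : ℝ) else 0)
      = ∑ a : A, (if t a = v then (n (h a) : ℝ) else 0))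
    (nsvz : ∀ v : V, 2 * (n v : ℝ)
      + (∑ a : A, if t a = v then (R a - 1) * (n (h a) : ℝ) else 0)
      + (∑ a : A, if h a = v then (R a - 1) * (n (t a) : ℝ) else 0) = 0)
    (hTrB : ∀ q : V → ℝ,
      (∀ v : V, ∑ a : A, (if h a = v then (n (t a) : ℝ) * q (t a) else 0)
        = ∑ a : A, (if t a = v then (n (h a) : ℝ) * q (h a) else 0)) →
      (∑ a : A, (n (t a) : ℝ) * (n (h a) : ℝ) * (q (h a) - q (t a)) = 0)
      ∧ ∑ a : A, (n (t a) : ℝ) * (n (h a) : ℝ) * (R a - 1) ^ 2 * (q (h a) - q (t a)) = 0)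
    (hTrRBB : ∀ q : V → ℝ,
      (∀ v : V, ∑ a : A, (if h a = v then (n (t a) : ℝ) * q (t a) else 0)
        = ∑ a : A, (if t a = v then (n (h a) : ℝ) * q (h a) else 0)) →
      (¬ ∀ v w : V, q v = q w) →
      ∑ a : A, (n (t a) : ℝ) * (n (h a) : ℝ) * (R a - 1) * (q (h a) - q (t a)) ^ 2 < 0)
    (lam : ℝ)
    (hlam : lam = (1 / 3) * ((∑ v : V, (n v : ℝ) ^ 2)
      + ∑ a : A, (n (t a) : ℝ) * (n (h a) : ℝ) * (R a - 1) ^ 3))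
    (hlampos : 0 < lam)
    (aCharge : ℝ)
    (haCharge : aCharge = (9 / 32) * ((∑ v : V, (n v : ℝ) ^ 2)
      + ∑ a : A, (n (t a) : ℝ) * (n (h a) : ℝ) * (R a - 1) ^ 3))
    (D : ℝ → Matrix V V ℝ)
    (hD : ∀ (s : ℝ) (v w : V), D s v w =
      (if v = w then (1 : ℝ) else 0) * (1 - Real.exp (-2 * s))
      - (∑ a : A, if t a = v ∧ h a = w then Real.exp (-(s * R a)) else 0)
      + ∑ a : A, if t a = w ∧ h a = v then Real.exp (-(s * (2 - R a))) else 0) :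
    ∃ ε > (0 : ℝ),
      (∀ s : ℝ, 0 < s → s < ε → IsUnit (D s))
      ∧ ∀ v w : V,
          Tendsto (fun s : ℝ => s ^ 3 * (D s)⁻¹ v w) (nhdsWithin 0 (Set.Ioi 0))
            (nhds ((n v : ℝ) * (n w : ℝ) / lam))
          ∧ (n v : ℝ) * (n w : ℝ) / lam = (27 / 32) * ((n v : ℝ) * (n w : ℝ)) / aCharge := by
  have H := QuiverHilbert.cubicDegeneration_symmDenominator t h (fun a => R a - 1)
    (fun v => (n v : ℝ)) (fun v => Nat.cast_ne_zero.2 (hn v).ne') anom nsvz (fun q hq => (hTrB q hq).2) hTrRBB hlam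
    hlampos.ne'
  have hDE (s : ℝ) :
      D s = Real.exp (-s) • QuiverHilbert.symmDenominator t h (fun a => R a - 1) s := by
    ext v w
    simp only [hD, QuiverHilbert.symmDenominator, QuiverHilbert.weightMatrix,
      Matrix.smul_apply, Matrix.add_apply, Matrix.sub_apply, Matrix.one_apply,
      smul_eq_mul, mul_add, mul_sub, sub_mul, mul_sum, mul_ite, mul_zero, ← Real.exp_add,
      and_comm (a := t _ = w)]
    ring_nf
    rw [← Real.exp_nat_mul, ← Real.exp_add, neg_add_cancel, Real.exp_zero]
    split_ifs <;> ring_nf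
  have hunit : ∀ᶠ s in nhdsWithin (0 : ℝ) (Set.Ioi 0), IsUnit (D s) := by
    filter_upwards [H.eventually_isUnit] with s hs
    rw [hDE]
    exact (isUnit_smul_iff (Units.mk0 _ (Real.exp_ne_zero (-s))) _).2 hs
  obtain ⟨ε, hε, hsub⟩ := mem_nhdsGT_iff_exists_Ioo_subset.1 hunit
  refine ⟨ε, hε, fun s h0 h1 => hsub ⟨h0, h1⟩, fun v w => ⟨?_, ?_⟩⟩
  · have hexp : Tendsto Real.exp (nhdsWithin (0 : ℝ) (Set.Ioi 0)) (nhds 1) := by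
      simpa using (Real.continuous_exp.tendsto 0).mono_left nhdsWithin_le_nhds
    have hlim := hexp.mul (H.tendsto_inv v w)
    rw [one_mul] at hlim
    refine hlim.congr' ?_
    filter_upwards [H.eventually_isUnit] with s hs
    have hinv :
        (D s)⁻¹ = Real.exp s • (QuiverHilbert.symmDenominator t h (fun a => R a - 1) s)⁻¹ := by
      refine Matrix.inv_eq_right_inv ?_
      rw [hDE, smul_mul_smul_comm, ← Real.exp_add, neg_add_cancel, Real.exp_zero, one_smul,
        Matrix.mul_nonsing_inv _ ((Matrix.isUnit_iff_isUnit_det _).1 hs)]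
    rw [hinv, Matrix.smul_apply, smul_eq_mul]
    ring
  · have : aCharge = 27 / 32 * lam := by rw [haCharge, hlam]; ring
    rw [this, mul_div_mul_left _ _ (by norm_num)]
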